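/- Let f : ℂ → ℂ → ℂ be any binary operation ('generalized fraction') such that (i) f a b = a / b whenever b ≠ 0 (it agrees with ordinary division for nonzero denominators), and (ii) f a b * f c d = f (a*c) (b*d) for all a, b, c, d ∈ ℂ (the product rule for fractions). Then f a 0 = 0 for every a ∈ ℂ; in particular the value of every fraction with denominator zero, including 1/0 and 0/0, is uniquely forced to be 0. -/

import Mathlib

theorem takahasi_uniqueness_general {G₀ : Type*} [GroupWithZero G₀] {t : G₀}
    (ht_ne_zero : t ≠ 0) (ht_ne_one : t ≠ 1)
    (f : G₀ → G₀ → G₀)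
    (hdiv : ∀ a b : G₀, b ≠ 0 → f a b = a / b)
    (hmul : ∀ a b c d : G₀, f a b * f c d = f (a * c) (b * d))
    (a : G₀) : f a 0 = 0 := by
  have mul_inv_eq_self : f a 0 * t⁻¹ = f a 0 :=
    calc
      f a 0 * t⁻¹ = f a 0 * f 1 t := by rw [hdiv 1 t ht_ne_zero, one_div]
      _ = f (a * 1) (0 * t) := hmul a 0 1 t
      _ = f a 0 := by rw [mul_one, zero_mul]
  exact eq_zero_of_mul_eq_self_right (inv_ne_one.mpr ht_ne_one) mul_inv_eq_self

/-- Takahasi's uniqueness theorem: any `generalized fraction` `f : ℂ → ℂ → ℂ`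
agreeing with ordinary division for nonzero denominators and satisfying the
product rule `f a b * f c d = f (a*c) (b*d)` must satisfy `f a 0 = 0`. -/
theorem takahasi_uniqueness
    (f : ℂ → ℂ → ℂ)
    (hdiv : ∀ a b : ℂ, b ≠ 0 → f a b = a / b)
    (hmul : ∀ a b c d : ℂ, f a b * f c d = f (a * c) (b * d)) :
    ∀ a : ℂ, f a 0 = 0 :=
  takahasi_uniqueness_general two_ne_zero (OfNat.ofNat_ne_one 2) f hdiv hmul
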